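/- Let k ≥ 4 be a fixed integer and let α, β, γ, δ ∈ {0,1,…,k} with α, δ ∈ {0,k}. There exists a k-L(2,1)-labelling L of the gadget G_k with L(u) = α, L(a_u) = β, L(a_v) = γ, L(v) = δ if and only if the following conditions hold: if (α,δ) = (0,0) then (β,γ) ∈ {(2,k), (k,2), (k−2,k), (k,k−2)}; if (α,δ) = (k,k) then (β,γ) ∈ {(2,0), (0,2), (k−2,0), (0,k−2)}; if (α,δ) = (k,0) then (β,γ) = (1,k−1); if (α,δ) = (0,k) then (β,γ) = (k−1,1). -/

import Mathlib

/-- For an integer `k`, a `k`-L(2,1)-labelling of a graph `G` is a map from the vertices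
to `{0,1,…,k}` such that labels of adjacent vertices differ by at least `2` and vertices
at distance exactly `2` get distinct labels. -/
def IsL21Labelling {V : Type*} (G : SimpleGraph V) (k : ℕ) (L : V → ℕ) : Prop :=
  (∀ v, L v ≤ k) ∧
  (∀ x y, G.Adj x y → 2 ≤ |(L x : ℤ) - (L y : ℤ)|) ∧
  (∀ x y, G.dist x y = 2 → L x ≠ L y)

/-- The vertices of the gadget `G₅`. -/
inductive G5V | u | au | av | v | bu | bv | c | d | e1 | e2 | e3 | f | g1 | g2
deriving DecidableEq

open G5V in
/-- The gadget `G₅`. -/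
def G5 : SimpleGraph G5V :=
  SimpleGraph.fromRel (fun x y => (x, y) ∈
    [(u,au),(au,av),(av,v),(au,bu),(av,bv),(bu,c),(bv,c),(c,d),
     (d,e1),(d,e2),(d,e3),(e1,f),(e2,f),(f,g1),(f,g2)])

/-- The vertices of the graph `H'` for a given `k`:
`c, d, e, f₁, …, f_{k-3}, g, h, i`. -/
inductive HpV (k : ℕ) | c | d | e | f (j : Fin (k - 3)) | g | h | i
deriving DecidableEq

/-- The adjacency generating relation of `H'`: edges `cd`, `de`, `gh`, `gi`,
and `d fⱼ`, `g fⱼ` for every `j`. -/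
def HpAdj (k : ℕ) : HpV k → HpV k → Prop := fun x y =>
  (x = HpV.c ∧ y = HpV.d) ∨ (x = HpV.d ∧ y = HpV.e) ∨
  (x = HpV.g ∧ y = HpV.h) ∨ (x = HpV.g ∧ y = HpV.i) ∨
  (∃ j, (x = HpV.d ∧ y = HpV.f j) ∨ (x = HpV.g ∧ y = HpV.f j))

/-- The vertices of the gadget `G_k` for `k ≠ 5`: the path `u, a_u, a_v, v`,
the vertices `b₁, …, b_{k-5}`, and for each `i` two copies (indexed by `Bool`)
of the graph `H'`.  (For `k = 4` the sets of `b`- and `H'`-vertices are empty and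
this is just the path `u, a_u, a_v, v`, i.e. the gadget `G₄`.) -/
inductive GkV (k : ℕ)
| u | au | av | v
| b (i : Fin (k - 5))
| hp (i : Fin (k - 5)) (s : Bool) (x : HpV k)

/-- The adjacency generating relation of the gadget `G_k` for `k ≠ 5`. -/
def GkAdj (k : ℕ) : GkV k → GkV k → Prop := fun x y =>
  (x = GkV.u ∧ y = GkV.au) ∨ (x = GkV.au ∧ y = GkV.av) ∨ (x = GkV.av ∧ y = GkV.v) ∨
  (∃ i, (x = GkV.au ∧ y = GkV.b i) ∨ (x = GkV.av ∧ y = GkV.b i)) ∨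
  (∃ i s, x = GkV.b i ∧ y = GkV.hp i s HpV.c) ∨
  (∃ i s x' y', x = GkV.hp i s x' ∧ y = GkV.hp i s y' ∧ HpAdj k x' y')

/-- The gadget `G_k` for `k ≠ 5`. -/
def Gk (k : ℕ) : SimpleGraph (GkV k) := SimpleGraph.fromRel (GkAdj k)

/-- A graph together with four distinguished vertices `u, a_u, a_v, v`. -/
structure GadgetData where
  V : Type
  G : SimpleGraph V
  u : V
  au : V
  av : V
  v : V

/-- The gadget `G_k` for `k ≥ 4`, with its distinguished vertices: for `k = 5` it is
the special gadget `G₅`, for `k = 4` and `k ≥ 6` it is the gadget `G_k` above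
(for `k = 4` this is just the path `u, a_u, a_v, v`, i.e. `G₄`). -/
def gadget (k : ℕ) : GadgetData :=
  if k = 5 then ⟨G5V, G5, G5V.u, G5V.au, G5V.av, G5V.v⟩
  else ⟨GkV k, Gk k, GkV.u, GkV.au, GkV.av, GkV.v⟩

/-!
A vertex with at least `k - 1` neighbours must be labelled `0` or `k`. In `H'` this applies to `d`
and `g`, which get both of these labels; the `f_j` then use up `2, …, k-2`, so `c` is left with a
label in `{0, 1}` or `{k-1, k}`, at the end opposite to the label of `d`. Hence every `b_i` has a
label in `1, …, k-1`, and a `b_i` labelled `1` has the labels `k-1` and `k` next to it, which bars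
`a_u` and `a_v` from them. The `k - 5` distinct labels of the `b_i` miss only four of `1, …, k-1`;
since they keep distance two from the labels of `a_u` and `a_v`, these two can only be as claimed.
The vertices `c, d, e_j, f, g_j` of `G_5` form a copy of `H'` and play the same role.
Reflecting the gadget and replacing `L` by `k - L` reduces everything to `2 ≤ β < γ` for the
necessity and to three labellings for the existence.
-/

/-- Two labels allowed on adjacent vertices, in a form that `omega` can use. -/
abbrev Spaced (a b : ℕ) : Prop := a + 2 ≤ b ∨ b + 2 ≤ a

lemma two_le_abs_sub_iff_spaced (a b : ℕ) : 2 ≤ |(a : ℤ) - b| ↔ Spaced a b := by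
  rw [le_abs]
  omega

lemma dist_eq_two_iff {V : Type*} {G : SimpleGraph V} {x y : V} :
    G.dist x y = 2 ↔ x ≠ y ∧ ¬G.Adj x y ∧ (G.commonNeighbors x y).Nonempty := by
  rw [SimpleGraph.dist, ENat.toNat_eq_iff two_ne_zero, Nat.cast_ofNat,
    SimpleGraph.edist_eq_two_iff]

section Labelling

variable {V W : Type*} {G : SimpleGraph V} {H : SimpleGraph W} {k : ℕ} {L : V → ℕ}

/-- The condition at distance two becomes local: adjacent vertices have distinct labels anyway. -/
lemma isL21Labelling_iff :
    IsL21Labelling G k L ↔ (∀ x, L x ≤ k) ∧ (∀ x y, G.Adj x y → Spaced (L x) (L y)) ∧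
      ∀ z, Set.InjOn L (G.neighborSet z) := by
  simp only [IsL21Labelling, two_le_abs_sub_iff_spaced]
  refine and_congr_right fun _ => and_congr_right fun spaced => ⟨fun h z x hx y hy hL => ?_,
    fun h x y hxy => ?_⟩
  · by_contra hne
    have nonadj : ¬G.Adj x y := fun hxy => by
      have := spaced x y hxy
      omega
    exact h x y (dist_eq_two_iff.2 ⟨hne, nonadj, z, hx.symm, hy.symm⟩) hL
  · obtain ⟨hne, -, z, hx, hy⟩ := dist_eq_two_iff.1 hxy
    exact (h z).ne hx.symm hy.symm hne

namespace IsL21Labelling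

lemma le (hL : IsL21Labelling G k L) (x : V) : L x ≤ k := hL.1 x

lemma spaced (hL : IsL21Labelling G k L) {x y : V} (h : G.Adj x y) : Spaced (L x) (L y) :=
  (isL21Labelling_iff.1 hL).2.1 x y h

lemma injOn_neighborSet (hL : IsL21Labelling G k L) (z : V) : Set.InjOn L (G.neighborSet z) :=
  (isL21Labelling_iff.1 hL).2.2 z

lemma ne_of_adj_adj (hL : IsL21Labelling G k L) {x y z : V} (hx : G.Adj x z) (hy : G.Adj z y)
    (hne : x ≠ y) : L x ≠ L y :=
  (hL.injOn_neighborSet z).ne hx.symm hy hne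

lemma comp_hom (hL : IsL21Labelling G k L) (φ : H →g G) (hφ : Function.Injective φ) :
    IsL21Labelling H k (L ∘ φ) :=
  isL21Labelling_iff.2 ⟨fun x => hL.le (φ x), fun _ _ h => hL.spaced (φ.map_adj h),
    fun z => (hL.injOn_neighborSet (φ z)).comp hφ.injOn fun _ h => φ.map_adj h⟩

lemma compl (hL : IsL21Labelling G k L) : IsL21Labelling G k (fun x => k - L x) := by
  refine isL21Labelling_iff.2 ⟨fun x => Nat.sub_le k (L x), fun x y h => ?_,
    fun z x hx y hy hxy => hL.injOn_neighborSet z hx hy ?_⟩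
  · have := hL.spaced h
    have := hL.le x
    have := hL.le y
    omega
  · have := hL.le x
    have := hL.le y
    simp only at hxy
    omega

/-- An interior label `L z` rules out three of the `k + 1` labels for the neighbours of `z`. -/
lemma eq_zero_or_eq_of_card_neighbors (hL : IsL21Labelling G k L) {z : V} {N : Finset V}
    (hN : (N : Set V) ⊆ G.neighborSet z) (hcard : k ≤ N.card + 1) : L z = 0 ∨ L z = k := by
  by_contra! hz
  have hzk := hL.le z
  have maps :
      Set.MapsTo L N (Finset.range (k + 1) \ Finset.Icc (L z - 1) (L z + 1) : Finset ℕ) := by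
    intro x hx
    have := hL.spaced (hN hx)
    have := hL.le x
    simp only [Finset.mem_coe, Finset.mem_sdiff, Finset.mem_range, Finset.mem_Icc]
    omega
  have card_le := Finset.card_le_card_of_injOn L maps ((hL.injOn_neighborSet z).mono hN)
  have interval_sub : Finset.Icc (L z - 1) (L z + 1) ⊆ Finset.range (k + 1) := by
    intro t
    simp only [Finset.mem_range, Finset.mem_Icc]
    omega
  rw [Finset.card_sdiff_of_subset interval_sub, Finset.card_range, Nat.card_Icc] at card_le
  omega

end IsL21Labelling

end Labelling

/-- The graph `H'`. -/
def Hp (k : ℕ) : SimpleGraph (HpV k) := SimpleGraph.fromRel (HpAdj k)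

namespace Hp

variable {k : ℕ} {L : HpV k → ℕ} {x : HpV k}

lemma adj_c_iff : (Hp k).Adj .c x ↔ x = .d := by
  grind [Hp, HpAdj, SimpleGraph.fromRel_adj]

lemma adj_d_iff : (Hp k).Adj .d x ↔ x = .c ∨ x = .e ∨ ∃ j, x = .f j := by
  grind [Hp, HpAdj, SimpleGraph.fromRel_adj]

lemma adj_e_iff : (Hp k).Adj .e x ↔ x = .d := by
  grind [Hp, HpAdj, SimpleGraph.fromRel_adj]

lemma adj_f_iff {j : Fin (k - 3)} : (Hp k).Adj (.f j) x ↔ x = .d ∨ x = .g := by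
  grind [Hp, HpAdj, SimpleGraph.fromRel_adj]

lemma adj_g_iff : (Hp k).Adj .g x ↔ x = .h ∨ x = .i ∨ ∃ j, x = .f j := by
  grind [Hp, HpAdj, SimpleGraph.fromRel_adj]

lemma adj_h_iff : (Hp k).Adj .h x ↔ x = .g := by
  grind [Hp, HpAdj, SimpleGraph.fromRel_adj]

lemma adj_i_iff : (Hp k).Adj .i x ↔ x = .g := by
  grind [Hp, HpAdj, SimpleGraph.fromRel_adj]

lemma adj_d_f (j : Fin (k - 3)) : (Hp k).Adj .d (.f j) := adj_d_iff.2 (.inr (.inr ⟨j, rfl⟩))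

lemma adj_g_f (j : Fin (k - 3)) : (Hp k).Adj .g (.f j) := adj_g_iff.2 (.inr (.inr ⟨j, rfl⟩))

/-- The vertices `f₁, …, f_{k-3}` of `H'`. -/
def fVertices (k : ℕ) : Finset (HpV k) := Finset.univ.image HpV.f

lemma mem_fVertices : x ∈ fVertices k ↔ ∃ j, x = .f j := by
  simp [fVertices, eq_comm]

lemma card_fVertices : (fVertices k).card = k - 3 := by
  rw [fVertices, Finset.card_image_of_injective _ fun _ _ => HpV.f.inj, Finset.card_fin]

lemma d_eq_zero_or_eq (hk : 4 ≤ k) (hL : IsL21Labelling (Hp k) k L) : L .d = 0 ∨ L .d = k := by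
  refine hL.eq_zero_or_eq_of_card_neighbors (N := insert .c (insert .e (fVertices k))) ?_ ?_
  · intro x
    simp [adj_d_iff, mem_fVertices]
  · rw [Finset.card_insert_of_notMem (by simp [mem_fVertices]),
      Finset.card_insert_of_notMem (by simp [mem_fVertices]), card_fVertices]
    omega

lemma g_eq_zero_or_eq (hk : 4 ≤ k) (hL : IsL21Labelling (Hp k) k L) : L .g = 0 ∨ L .g = k := by
  refine hL.eq_zero_or_eq_of_card_neighbors (N := insert .h (insert .i (fVertices k))) ?_ ?_
  · intro x
    simp [adj_g_iff, mem_fVertices]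
  · rw [Finset.card_insert_of_notMem (by simp [mem_fVertices]),
      Finset.card_insert_of_notMem (by simp [mem_fVertices]), card_fVertices]
    omega

/-- The labels `0` and `k` are taken by `d` and `g`, so the `f_j` use up all of `2, …, k-2`. -/
lemma c_notMem_Icc (hk : 4 ≤ k) (hL : IsL21Labelling (Hp k) k L) :
    L .c ∉ Finset.Icc 2 (k - 2) := by
  have hd := d_eq_zero_or_eq hk hL
  have hg := g_eq_zero_or_eq hk hL
  have hdg : L .d ≠ L .g :=
    hL.ne_of_adj_adj (adj_d_f ⟨0, by omega⟩) (adj_g_f ⟨0, by omega⟩).symm (by simp)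
  have maps : Set.MapsTo L (fVertices k) (Finset.Icc 2 (k - 2)) := by
    intro x hx
    obtain ⟨j, rfl⟩ := mem_fVertices.1 hx
    have := hL.spaced (adj_d_f j)
    have := hL.spaced (adj_g_f j)
    have := hL.le (.f j)
    simp only [Finset.coe_Icc, Set.mem_Icc]
    omega
  have inj : Set.InjOn L (fVertices k) := (hL.injOn_neighborSet .d).mono fun x hx =>
    adj_d_iff.2 (.inr (.inr (mem_fVertices.1 hx)))
  have surj : Set.SurjOn L (fVertices k) (Finset.Icc 2 (k - 2)) :=
    Finset.surjOn_of_injOn_of_card_le L maps inj (by rw [Nat.card_Icc, card_fVertices]; omega)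
  intro hc
  obtain ⟨x, hx, hxc⟩ := surj hc
  obtain ⟨j, rfl⟩ := mem_fVertices.1 hx
  exact hL.ne_of_adj_adj (adj_d_f j).symm (adj_d_iff.2 (.inl rfl)) (by simp) hxc

theorem c_d_cases (hk : 4 ≤ k) (hL : IsL21Labelling (Hp k) k L) :
    L .d = k ∧ L .c ≤ 1 ∨ L .d = 0 ∧ k - 1 ≤ L .c := by
  have hc := c_notMem_Icc hk hL
  have hd := d_eq_zero_or_eq hk hL
  have := hL.spaced (adj_c_iff.2 rfl)
  have := hL.le .c
  rw [Finset.mem_Icc] at hc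
  omega

/-- The labelling of `H'` with label `a ≤ 1` at `c`. -/
def lowLabel (k a : ℕ) : HpV k → ℕ
  | .c => a
  | .d => k
  | .e => 1 - a
  | .f j => j + 2
  | .g => 0
  | .h => k
  | .i => k - 1

lemma isL21Labelling_lowLabel (hk : 4 ≤ k) {a : ℕ} (ha : a ≤ 1) :
    IsL21Labelling (Hp k) k (lowLabel k a) := by
  refine isL21Labelling_iff.2 ⟨?_, ?_, ?_⟩
  · rintro (_ | _ | _ | j | _ | _ | _) <;> grind [lowLabel]
  · rintro (_ | _ | _ | j | _ | _ | _) y hy <;>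
      grind [lowLabel, adj_c_iff, adj_d_iff, adj_e_iff, adj_f_iff, adj_g_iff, adj_h_iff, adj_i_iff]
  · rintro (_ | _ | _ | j | _ | _ | _) x hx y hy hxy <;>
      grind [lowLabel, SimpleGraph.mem_neighborSet,
        adj_c_iff, adj_d_iff, adj_e_iff, adj_f_iff, adj_g_iff, adj_h_iff, adj_i_iff]

theorem exists_isL21Labelling (hk : 4 ≤ k) {a : ℕ} (ha : a ≤ k) (hc : a ≤ 1 ∨ k - 1 ≤ a) :
    ∃ L, IsL21Labelling (Hp k) k L ∧ L .c = a ∧ (L .d = 0 ∨ L .d = k) := by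
  rcases hc with low | high
  · exact ⟨lowLabel k a, isL21Labelling_lowLabel hk low, rfl, .inr rfl⟩
  · exact ⟨_, (isL21Labelling_lowLabel hk (by omega : k - a ≤ 1)).compl, Nat.sub_sub_self ha,
      .inl (Nat.sub_self k)⟩

end Hp

/-- The conditions that the path `u, a_u, a_v, v` by itself imposes on its labels
`α, β, γ, δ`. -/
structure IsPathLabelling (k α β γ δ : ℕ) : Prop where
  le₁ : α ≤ k
  le₂ : β ≤ k
  le₃ : γ ≤ k
  le₄ : δ ≤ k
  spaced₁₂ : Spaced α β
  spaced₂₃ : Spaced β γ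
  spaced₃₄ : Spaced γ δ
  ne₁₃ : α ≠ γ
  ne₂₄ : β ≠ δ

namespace GadgetData

variable {D : GadgetData} {k α β γ δ : ℕ}

/-- `D` has a `k`-L(2,1)-labelling with labels `α, β, γ, δ` at `u, a_u, a_v, v`. -/
def Admits (D : GadgetData) (k α β γ δ : ℕ) : Prop :=
  ∃ L : D.V → ℕ, IsL21Labelling D.G k L ∧ L D.u = α ∧ L D.au = β ∧ L D.av = γ ∧ L D.v = δ

/-- The distinguished vertices of `D` form a path `u, a_u, a_v, v` that some symmetry of the graph
reverses. Only half of the path is recorded: the reflection gives the other half. -/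
structure IsSymmetric (D : GadgetData) : Prop where
  adj_u_au : D.G.Adj D.u D.au
  adj_au_av : D.G.Adj D.au D.av
  u_ne_av : D.u ≠ D.av
  exists_reflection : ∃ φ : D.G →g D.G, Function.Injective φ ∧
    φ D.u = D.v ∧ φ D.au = D.av ∧ φ D.av = D.au ∧ φ D.v = D.u

lemma Admits.compl (h : D.Admits k α β γ δ) : D.Admits k (k - α) (k - β) (k - γ) (k - δ) := by
  obtain ⟨L, hL, rfl, rfl, rfl, rfl⟩ := h
  exact ⟨_, hL.compl, rfl, rfl, rfl, rfl⟩

lemma Admits.swap (hD : D.IsSymmetric) (h : D.Admits k α β γ δ) : D.Admits k δ γ β α := by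
  obtain ⟨L, hL, rfl, rfl, rfl, rfl⟩ := h
  obtain ⟨φ, hφ, hu, hau, hav, hv⟩ := hD.exists_reflection
  exact ⟨L ∘ φ, hL.comp_hom φ hφ, congrArg L hu, congrArg L hau, congrArg L hav, congrArg L hv⟩

lemma Admits.isPathLabelling (hD : D.IsSymmetric) (h : D.Admits k α β γ δ) :
    IsPathLabelling k α β γ δ := by
  obtain ⟨L, hL, rfl, rfl, rfl, rfl⟩ := h
  obtain ⟨φ, hφ, hu, hau, hav, -⟩ := hD.exists_reflection
  have adj_av_v : D.G.Adj D.av D.v := by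
    rw [← hu, ← hau]
    exact (φ.map_adj hD.adj_u_au).symm
  have au_ne_v : D.au ≠ D.v := by
    rw [← hu, ← hav]
    exact hφ.ne hD.u_ne_av.symm
  exact ⟨hL.le _, hL.le _, hL.le _, hL.le _, hL.spaced hD.adj_u_au, hL.spaced hD.adj_au_av,
    hL.spaced adj_av_v, hL.ne_of_adj_adj hD.adj_u_au hD.adj_au_av hD.u_ne_av,
    hL.ne_of_adj_adj hD.adj_au_av adj_av_v au_ne_v⟩

/-- A symmetric gadget works if it forces `(β, γ)` to be `(2, k)` or `(k-2, k)` as soon as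
`2 ≤ β < γ`, and realizes one labelling from each orbit of reflection and complementation. -/
structure IsForcing (D : GadgetData) (k : ℕ) : Prop where
  isSymmetric : D.IsSymmetric
  eq_of_two_le : ∀ {α β γ δ}, D.Admits k α β γ δ → 2 ≤ β → β < γ → γ = k ∧ (β = 2 ∨ β = k - 2)
  admits_two : D.Admits k 0 2 k 0
  admits_sub_two : D.Admits k 0 (k - 2) k 0
  admits_one : D.Admits k k 1 (k - 1) 0

/-- The inner labels `(β, γ)` that the gadgets allow for given end labels `(α, δ)`. -/
def IsForcedPattern (k α β γ δ : ℕ) : Prop :=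
  (α = 0 ∧ δ = 0 → (β, γ) ∈ ({(2, k), (k, 2), (k - 2, k), (k, k - 2)} : Set (ℕ × ℕ))) ∧
  (α = k ∧ δ = k → (β, γ) ∈ ({(2, 0), (0, 2), (k - 2, 0), (0, k - 2)} : Set (ℕ × ℕ))) ∧
  (α = k ∧ δ = 0 → (β, γ) = (1, k - 1)) ∧
  (α = 0 ∧ δ = k → (β, γ) = (k - 1, 1))

lemma IsForcing.isForcedPattern (hD : D.IsForcing k) (h : D.Admits k α β γ δ) :
    IsForcedPattern k α β γ δ := by
  obtain ⟨_, _, _, _, _, spaced, _, _, _⟩ := h.isPathLabelling hD.isSymmetric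
  have forced := hD.eq_of_two_le h
  have forced_swap := hD.eq_of_two_le (h.swap hD.isSymmetric)
  have forced_compl := hD.eq_of_two_le h.compl
  have forced_swap_compl := hD.eq_of_two_le (h.swap hD.isSymmetric).compl
  simp only [IsForcedPattern, Set.mem_insert_iff, Set.mem_singleton_iff, Prod.mk.injEq]
  refine ⟨?_, ?_, ?_, ?_⟩ <;> rintro ⟨rfl, rfl⟩ <;> rcases spaced with lt | gt <;> omega

lemma IsForcing.admits (hD : D.IsForcing k) (hk : 2 ≤ k) (hα : α = 0 ∨ α = k)
    (hδ : δ = 0 ∨ δ = k) (h : IsForcedPattern k α β γ δ) : D.Admits k α β γ δ := by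
  have two_compl := hD.admits_two.compl
  have sub_two_compl := hD.admits_sub_two.compl
  simp only [Nat.sub_zero, Nat.sub_self, Nat.sub_sub_self hk] at two_compl sub_two_compl
  simp only [IsForcedPattern, Set.mem_insert_iff, Set.mem_singleton_iff, Prod.mk.injEq] at h
  obtain ⟨h₀₀, hkk, hk₀, h₀k⟩ := h
  rcases hα with rfl | rfl <;> rcases hδ with rfl | rfl
  · rcases h₀₀ ⟨rfl, rfl⟩ with ⟨rfl, rfl⟩ | ⟨rfl, rfl⟩ | ⟨rfl, rfl⟩ | ⟨rfl, rfl⟩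
    exacts [hD.admits_two, hD.admits_two.swap hD.isSymmetric, hD.admits_sub_two,
      hD.admits_sub_two.swap hD.isSymmetric]
  · obtain ⟨rfl, rfl⟩ := h₀k ⟨rfl, rfl⟩
    exact hD.admits_one.swap hD.isSymmetric
  · obtain ⟨rfl, rfl⟩ := hk₀ ⟨rfl, rfl⟩
    exact hD.admits_one
  · rcases hkk ⟨rfl, rfl⟩ with ⟨rfl, rfl⟩ | ⟨rfl, rfl⟩ | ⟨rfl, rfl⟩ | ⟨rfl, rfl⟩
    exacts [sub_two_compl, sub_two_compl.swap hD.isSymmetric, two_compl,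
      two_compl.swap hD.isSymmetric]

theorem IsForcing.admits_iff (hD : D.IsForcing k) (hk : 2 ≤ k) (hα : α = 0 ∨ α = k)
    (hδ : δ = 0 ∨ δ = k) : D.Admits k α β γ δ ↔ IsForcedPattern k α β γ δ :=
  ⟨hD.isForcedPattern, hD.admits hk hα hδ⟩

end GadgetData

namespace Gk

variable {k : ℕ} {i : Fin (k - 5)} {s : Bool} {x : GkV k}

lemma adj_u_iff : (Gk k).Adj .u x ↔ x = .au := by
  grind [Gk, GkAdj, SimpleGraph.fromRel_adj]

lemma adj_au_iff : (Gk k).Adj .au x ↔ x = .u ∨ x = .av ∨ ∃ i, x = .b i := by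
  grind [Gk, GkAdj, SimpleGraph.fromRel_adj]

lemma adj_av_iff : (Gk k).Adj .av x ↔ x = .v ∨ x = .au ∨ ∃ i, x = .b i := by
  grind [Gk, GkAdj, SimpleGraph.fromRel_adj]

lemma adj_v_iff : (Gk k).Adj .v x ↔ x = .av := by
  grind [Gk, GkAdj, SimpleGraph.fromRel_adj]

lemma adj_b_iff : (Gk k).Adj (.b i) x ↔ x = .au ∨ x = .av ∨ ∃ s, x = .hp i s .c := by
  grind [Gk, GkAdj, SimpleGraph.fromRel_adj]

lemma adj_hp_iff {p : HpV k} : (Gk k).Adj (.hp i s p) x ↔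
    p = .c ∧ x = .b i ∨ ∃ q, (Hp k).Adj p q ∧ x = .hp i s q := by
  grind [Gk, GkAdj, Hp, SimpleGraph.fromRel_adj]

lemma adj_au_b (i : Fin (k - 5)) : (Gk k).Adj .au (.b i) := adj_au_iff.2 (.inr (.inr ⟨i, rfl⟩))

lemma adj_av_b (i : Fin (k - 5)) : (Gk k).Adj .av (.b i) := adj_av_iff.2 (.inr (.inr ⟨i, rfl⟩))

lemma adj_b_c (i : Fin (k - 5)) (s : Bool) : (Gk k).Adj (.b i) (.hp i s .c) :=
  adj_b_iff.2 (.inr (.inr ⟨s, rfl⟩))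

/-- The inclusion of a copy of `H'`. -/
def hpHom (i : Fin (k - 5)) (s : Bool) : Hp k →g Gk k where
  toFun := .hp i s
  map_rel' h := adj_hp_iff.2 (.inr ⟨_, h, rfl⟩)

/-- The reflection exchanging `u, a_u` with `v, a_v`. -/
def reflect : GkV k → GkV k
  | .u => .v
  | .au => .av
  | .av => .au
  | .v => .u
  | x => x

lemma involutive_reflect : Function.Involutive (reflect (k := k)) := fun x => by
  cases x <;> rfl

lemma adj_reflect {x y : GkV k} (h : (Gk k).Adj x y) : (Gk k).Adj (reflect x) (reflect y) := by
  cases x <;>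
    grind [reflect, adj_u_iff, adj_au_iff, adj_av_iff, adj_v_iff, adj_b_iff, adj_hp_iff]

/-- `G_k` as a gadget. For `k = 5` this is not the gadget of the theorem. -/
abbrev gadgetData (k : ℕ) : GadgetData := ⟨GkV k, Gk k, .u, .au, .av, .v⟩

lemma isSymmetric : (gadgetData k).IsSymmetric where
  adj_u_au := adj_u_iff.2 rfl
  adj_au_av := adj_au_iff.2 (.inr (.inl rfl))
  u_ne_av := by simp
  exists_reflection := ⟨⟨reflect, adj_reflect⟩, involutive_reflect.injective, rfl, rfl, rfl, rfl⟩

section Forcing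

variable {L : GkV k → ℕ} {α β γ δ : ℕ}

lemma c_d_cases (hk : 4 ≤ k) (hL : IsL21Labelling (Gk k) k L) (i : Fin (k - 5)) (s : Bool) :
    L (.hp i s .d) = k ∧ L (.hp i s .c) ≤ 1 ∨ L (.hp i s .d) = 0 ∧ k - 1 ≤ L (.hp i s .c) :=
  Hp.c_d_cases hk (hL.comp_hom (hpHom i s) fun _ _ h => (GkV.hp.inj h).2.2)

lemma label_b_pos (hk : 4 ≤ k) (hL : IsL21Labelling (Gk k) k L) (i : Fin (k - 5)) :
    0 < L (.b i) := by
  have b_ne_d : L (.b i) ≠ L (.hp i true .d) :=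
    hL.ne_of_adj_adj (adj_b_c i true) ((hpHom i true).map_adj (Hp.adj_c_iff.2 rfl)) (by simp)
  have := hL.spaced (adj_b_c i true)
  have := c_d_cases hk hL i true
  omega

lemma label_b_lt (hk : 4 ≤ k) (hL : IsL21Labelling (Gk k) k L) (i : Fin (k - 5)) :
    L (.b i) < k := by
  have : 0 < k - L (.b i) := label_b_pos hk hL.compl i
  omega

/-- If `b_i` has label `1`, the two vertices `c` next to it have labels `k - 1` and `k`. -/
lemma label_av_add_two_le_of_label_b_eq_one (hk : 4 ≤ k) (hL : IsL21Labelling (Gk k) k L)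
    (hb : L (.b i) = 1) : L .av + 2 ≤ k := by
  have c_ne_c : L (.hp i true .c) ≠ L (.hp i false .c) :=
    hL.ne_of_adj_adj (adj_b_c i true).symm (adj_b_c i false) (by simp)
  have c_ge (s : Bool) : k - 1 ≤ L (.hp i s .c) := by
    have := hL.spaced (adj_b_c i s)
    have := c_d_cases hk hL i s
    omega
  have av_ne_c (s : Bool) : L .av ≠ L (.hp i s .c) :=
    hL.ne_of_adj_adj (adj_av_b i) (adj_b_c i s) (by simp)
  have := c_ge true
  have := c_ge false
  have := av_ne_c true
  have := av_ne_c false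
  have := hL.le .av
  have := hL.le (.hp i true .c)
  have := hL.le (.hp i false .c)
  omega

/-- The `k - 5` labels of the `b_i` miss only four of the labels `1, …, k-1`. -/
lemma exists_label_b_mem (hk : 4 ≤ k) (hL : IsL21Labelling (Gk k) k L) {T : Finset ℕ}
    (hT : T ⊆ Finset.Ioo 0 k) (hcard : 5 ≤ T.card) : ∃ i, L (.b i) ∈ T := by
  have inj : Function.Injective fun i => L (.b i) := fun i j h =>
    GkV.b.inj (hL.injOn_neighborSet .au (adj_au_b i) (adj_au_b j) h)
  have image_sub : Finset.univ.image (fun i => L (.b i)) ⊆ Finset.Ioo 0 k :=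
    Finset.image_subset_iff.2 fun i _ =>
      Finset.mem_Ioo.2 ⟨label_b_pos hk hL i, label_b_lt hk hL i⟩
  obtain ⟨t, ht⟩ := Finset.inter_nonempty_of_card_lt_card_add_card image_sub hT <| by
    rw [Finset.card_image_of_injective _ inj, Finset.card_fin, Nat.card_Ioo]
    omega
  obtain ⟨ht_image, htT⟩ := Finset.mem_inter.1 ht
  obtain ⟨i, -, rfl⟩ := Finset.mem_image.1 ht_image
  exact ⟨i, htT⟩

lemma exists_label_b_eq (hk : 4 ≤ k) (hL : IsL21Labelling (Gk k) k L) (t₁ t₂ t₃ t₄ t₅ : ℕ)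
    (h : 0 < t₁ ∧ t₁ < t₂ ∧ t₂ < t₃ ∧ t₃ < t₄ ∧ t₄ < t₅ ∧ t₅ < k) :
    ∃ i, L (.b i) = t₁ ∨ L (.b i) = t₂ ∨ L (.b i) = t₃ ∨ L (.b i) = t₄ ∨ L (.b i) = t₅ := by
  have subset : ({t₁, t₂, t₃, t₄, t₅} : Finset ℕ) ⊆ Finset.Ioo 0 k := fun t => by
    simp only [Finset.mem_insert, Finset.mem_singleton, Finset.mem_Ioo]
    omega
  have card : ({t₁, t₂, t₃, t₄, t₅} : Finset ℕ).card = 5 := by grind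
  simpa using exists_label_b_mem hk hL subset card.ge

/-- Each excluded pair `(L a_u, L a_v)` would forbid five of the labels `1, …, k-1` on the `b_i`:
those next to `L a_u` or `L a_v`, and the label `1` when `L a_v ≥ k - 1`. -/
lemma label_av_eq_of_two_le (hk : 4 ≤ k) (hk5 : k ≠ 5) (hL : IsL21Labelling (Gk k) k L)
    (h_two : 2 ≤ L .au) (h_add : L .au + 2 ≤ L .av) :
    L .av = k ∧ (L .au = 2 ∨ L .au = k - 2) := by
  have hle := hL.le .av
  have spaced_au (i : Fin (k - 5)) := hL.spaced (adj_au_b i)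
  have spaced_av (i : Fin (k - 5)) := hL.spaced (adj_av_b i)
  have av_of_b_eq_one (i : Fin (k - 5)) := label_av_add_two_le_of_label_b_eq_one (i := i) hk hL
  by_contra excluded
  obtain av_le | ⟨au_eq, av_eq⟩ | ⟨le_av, two_lt, lt_sub_two⟩ : L .av ≤ k - 2 ∨
      L .au = 2 ∧ L .av = k - 1 ∨ k - 1 ≤ L .av ∧ 2 < L .au ∧ L .au < k - 2 := by
    omega
  · obtain ⟨i, hi⟩ := exists_label_b_eq hk hL (L .au - 1) (L .au) (L .au + 1) (L .av) (L .av + 1)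
      (by omega)
    have := spaced_au i
    have := spaced_av i
    omega
  · obtain ⟨i, hi⟩ := exists_label_b_eq hk hL 1 2 3 (k - 2) (k - 1) (by omega)
    have := spaced_au i
    have := spaced_av i
    omega
  · obtain ⟨i, hi⟩ := exists_label_b_eq hk hL 1 (L .au - 1) (L .au) (L .au + 1) (k - 1) (by omega)
    have := spaced_au i
    have := spaced_av i
    have := av_of_b_eq_one i
    omega

end Forcing

section Labelling

/-- The labelling of `G_k` with `α, β, γ, δ` on the path, `B i` at `b_i`, and `M s` on the `s`-th
copy of `H'` at each `b_i`. -/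
def labelling {k : ℕ} (α β γ δ : ℕ) (B : Fin (k - 5) → ℕ) (M : Bool → HpV k → ℕ) : GkV k → ℕ
  | .u => α
  | .au => β
  | .av => γ
  | .v => δ
  | .b i => B i
  | .hp _ s p => M s p

/-- Labels `B i` at `b_i` and `c s` at the vertex `c` of the `s`-th copy of `H'` at each `b_i` that
are compatible with each other and with the labels `β, γ` at `a_u, a_v`. -/
structure IsBranchLabelling (k β γ : ℕ) (B : Fin (k - 5) → ℕ) (c : Bool → ℕ) : Prop where
  injective_b : Function.Injective B
  pos : ∀ i, 0 < B i
  lt : ∀ i, B i < k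
  spaced_au : ∀ i, Spaced (B i) β
  spaced_av : ∀ i, Spaced (B i) γ
  spaced_c : ∀ i s, Spaced (B i) (c s)
  c_le : ∀ s, c s ≤ k
  c_extreme : ∀ s, c s ≤ 1 ∨ k - 1 ≤ c s
  injective_c : Function.Injective c
  c_ne_au : ∀ s, c s ≠ β
  c_ne_av : ∀ s, c s ≠ γ

variable {α β γ δ : ℕ} {B : Fin (k - 5) → ℕ} {c : Bool → ℕ} {M : Bool → HpV k → ℕ}

lemma spaced_labelling (path : IsPathLabelling k α β γ δ) (branch : IsBranchLabelling k β γ B c)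
    (hM : ∀ s, IsL21Labelling (Hp k) k (M s)) (hMc : ∀ s, M s .c = c s) {x y : GkV k}
    (hxy : (Gk k).Adj x y) :
    Spaced (labelling α β γ δ B M x) (labelling α β γ δ B M y) := by
  have spaced_c (i : Fin (k - 5)) (s : Bool) : Spaced (B i) (M s .c) :=
    hMc s ▸ branch.spaced_c i s
  cases x with
  | u => exact adj_u_iff.1 hxy ▸ path.spaced₁₂
  | v => exact adj_v_iff.1 hxy ▸ path.spaced₃₄.symm
  | au =>
    obtain rfl | rfl | ⟨i, rfl⟩ := adj_au_iff.1 hxy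
    exacts [path.spaced₁₂.symm, path.spaced₂₃, (branch.spaced_au i).symm]
  | av =>
    obtain rfl | rfl | ⟨i, rfl⟩ := adj_av_iff.1 hxy
    exacts [path.spaced₃₄, path.spaced₂₃.symm, (branch.spaced_av i).symm]
  | b i =>
    obtain rfl | rfl | ⟨s, rfl⟩ := adj_b_iff.1 hxy
    exacts [branch.spaced_au i, branch.spaced_av i, spaced_c i s]
  | hp i s p =>
    obtain ⟨rfl, rfl⟩ | ⟨q, hq, rfl⟩ := adj_hp_iff.1 hxy
    exacts [(spaced_c i s).symm, (hM s).spaced hq]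

lemma injOn_labelling (path : IsPathLabelling k α β γ δ) (branch : IsBranchLabelling k β γ B c)
    (hα : α = 0 ∨ α = k) (hδ : δ = 0 ∨ δ = k) (hM : ∀ s, IsL21Labelling (Hp k) k (M s))
    (hMc : ∀ s, M s .c = c s) (hMd : ∀ s, M s .d = 0 ∨ M s .d = k) (z : GkV k) :
    Set.InjOn (labelling α β γ δ B M) ((Gk k).neighborSet z) := by
  obtain ⟨-, -, -, -, -, spaced₂₃, -, ne₁₃, ne₂₄⟩ := path
  obtain ⟨inj_b, pos, lt, spaced_au, spaced_av, -, -, -, inj_c, c_ne_au, c_ne_av⟩ := branch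
  have B_ne_d (i : Fin (k - 5)) (s : Bool) : B i ≠ M s .d := by
    have := pos i
    have := lt i
    have := hMd s
    omega
  intro x hx y hy hxy
  cases z with
  | u => rw [adj_u_iff.1 hx, adj_u_iff.1 hy]
  | v => rw [adj_v_iff.1 hx, adj_v_iff.1 hy]
  | au => grind [labelling, adj_au_iff, SimpleGraph.mem_neighborSet, Function.Injective]
  | av => grind [labelling, adj_av_iff, SimpleGraph.mem_neighborSet, Function.Injective]
  | b i => grind [labelling, adj_b_iff, SimpleGraph.mem_neighborSet, Function.Injective]
  | hp i s p =>
    obtain ⟨rfl, rfl⟩ | ⟨q, hq, rfl⟩ := adj_hp_iff.1 hx <;>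
      obtain ⟨hp, rfl⟩ | ⟨r, hr, rfl⟩ := adj_hp_iff.1 hy
    · rfl
    · cases Hp.adj_c_iff.1 hr
      exact (B_ne_d i s hxy).elim
    · cases hp
      cases Hp.adj_c_iff.1 hq
      exact (B_ne_d i s hxy.symm).elim
    · rw [(hM s).injOn_neighborSet p hq hr hxy]

lemma admits (hk : 4 ≤ k) (path : IsPathLabelling k α β γ δ) (hα : α = 0 ∨ α = k)
    (hδ : δ = 0 ∨ δ = k) (branch : IsBranchLabelling k β γ B c) :
    (gadgetData k).Admits k α β γ δ := by
  choose M hM hMc hMd using fun s =>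
    Hp.exists_isL21Labelling hk (branch.c_le s) (branch.c_extreme s)
  have le : ∀ x, labelling α β γ δ B M x ≤ k
    | .u => path.le₁
    | .au => path.le₂
    | .av => path.le₃
    | .v => path.le₄
    | .b i => (branch.lt i).le
    | .hp _ s p => (hM s).le p
  exact ⟨labelling α β γ δ B M, isL21Labelling_iff.2 ⟨le,
    fun _ _ => spaced_labelling path branch hM hMc,
    injOn_labelling path branch hα hδ hM hMc hMd⟩, rfl, rfl, rfl, rfl⟩

lemma admits_two (hk : 4 ≤ k) : (gadgetData k).Admits k 0 2 k 0 := by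
  have path : IsPathLabelling k 0 2 k 0 := by constructor <;> omega
  have branch : IsBranchLabelling k 2 k (fun i => i + 4) (fun s => if s then 1 else 0) := by
    constructor <;> grind [Function.Injective, Bool.injective_iff]
  exact admits hk path (.inl rfl) (.inl rfl) branch

lemma admits_sub_two (hk : 4 ≤ k) : (gadgetData k).Admits k 0 (k - 2) k 0 := by
  have path : IsPathLabelling k 0 (k - 2) k 0 := by constructor <;> omega
  have branch : IsBranchLabelling k (k - 2) k (fun i => i + 2)
      (fun s => if s then k - 1 else 0) := by
    constructor <;> grind [Function.Injective, Bool.injective_iff]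
  exact admits hk path (.inl rfl) (.inl rfl) branch

lemma admits_one (hk : 4 ≤ k) : (gadgetData k).Admits k k 1 (k - 1) 0 := by
  have path : IsPathLabelling k k 1 (k - 1) 0 := by constructor <;> omega
  have branch : IsBranchLabelling k 1 (k - 1) (fun i => i + 3)
      (fun s => if s then k else 0) := by
    constructor <;> grind [Function.Injective, Bool.injective_iff]
  exact admits hk path (.inr rfl) (.inl rfl) branch

end Labelling

lemma isForcing (hk : 4 ≤ k) (hk5 : k ≠ 5) : (gadgetData k).IsForcing k where
  isSymmetric := isSymmetric
  eq_of_two_le h h_two h_lt := by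
    have add_two_le := (h.isPathLabelling isSymmetric).spaced₂₃.resolve_right (by omega)
    obtain ⟨L, hL, -, rfl, rfl, -⟩ := h
    exact label_av_eq_of_two_le hk hk5 hL h_two add_two_le
  admits_two := admits_two hk
  admits_sub_two := admits_sub_two hk
  admits_one := admits_one hk

end Gk

namespace G5

instance : Fintype G5V where
  elems := {.u, .au, .av, .v, .bu, .bv, .c, .d, .e1, .e2, .e3, .f, .g1, .g2}
  complete x := by cases x <;> decide

instance : DecidableRel G5.Adj := fun _ _ =>
  decidable_of_iff _ (SimpleGraph.fromRel_adj _ _ _).symm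

/-- The embedding of `H'` for `k = 5` into `G_5`. -/
def hpMap : HpV 5 → G5V
  | .c => .c
  | .d => .d
  | .e => .e3
  | .f j => if j = 0 then .e1 else .e2
  | .g => .f
  | .h => .g1
  | .i => .g2

lemma injective_hpMap : Function.Injective hpMap := by
  rintro (_ | _ | _ | j | _ | _ | _) (_ | _ | _ | j' | _ | _ | _) h <;> grind [hpMap]

lemma adj_hpMap_of_hpAdj {x y : HpV 5} (h : HpAdj 5 x y) : G5.Adj (hpMap x) (hpMap y) := by
  obtain ⟨rfl, rfl⟩ | ⟨rfl, rfl⟩ | ⟨rfl, rfl⟩ | ⟨rfl, rfl⟩ | ⟨j, ⟨rfl, rfl⟩ | ⟨rfl, rfl⟩⟩ := h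
  any_goals decide
  all_goals fin_cases j <;> decide

lemma adj_hpMap {x y : HpV 5} (h : (Hp 5).Adj x y) : G5.Adj (hpMap x) (hpMap y) :=
  ((SimpleGraph.fromRel_adj _ _ _).1 h).2.elim adj_hpMap_of_hpAdj fun h =>
    (adj_hpMap_of_hpAdj h).symm

/-- The reflection exchanging `u, a_u, b_u` with `v, a_v, b_v`. -/
def reflect : G5V → G5V
  | .u => .v
  | .au => .av
  | .av => .au
  | .v => .u
  | .bu => .bv
  | .bv => .bu
  | x => x

lemma involutive_reflect : Function.Involutive reflect := fun x => by
  cases x <;> rfl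

lemma adj_reflect : ∀ {x y : G5V}, G5.Adj x y → G5.Adj (reflect x) (reflect y) := by
  decide +kernel

/-- `G_5` as a gadget. -/
abbrev gadgetData : GadgetData := ⟨G5V, G5, .u, .au, .av, .v⟩

lemma isSymmetric : gadgetData.IsSymmetric where
  adj_u_au := by decide
  adj_au_av := by decide
  u_ne_av := by decide
  exists_reflection := ⟨⟨reflect, adj_reflect⟩, involutive_reflect.injective, rfl, rfl, rfl, rfl⟩

/-- With `2` and `4` at `a_u` and `a_v`, the label of `b_u` is the one of `0` and `5` not used at
`d`, which is too close to the label of `c`. -/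
lemma not_label_au_eq_two_and_label_av_eq_four {L : G5V → ℕ} (hL : IsL21Labelling G5 5 L) :
    ¬(L .au = 2 ∧ L .av = 4) := by
  rintro ⟨hau, hav⟩
  have c_d_cases : L .d = 5 ∧ L .c ≤ 1 ∨ L .d = 0 ∧ 4 ≤ L .c :=
    Hp.c_d_cases (by norm_num) (hL.comp_hom ⟨hpMap, adj_hpMap⟩ injective_hpMap)
  have bu_ne_av : L .bu ≠ L .av := hL.ne_of_adj_adj (z := .au) (by decide) (by decide) (by decide)
  have bu_ne_d : L .bu ≠ L .d := hL.ne_of_adj_adj (z := .c) (by decide) (by decide) (by decide)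
  have au_bu : Spaced (L .au) (L .bu) := hL.spaced (by decide)
  have bu_c : Spaced (L .bu) (L .c) := hL.spaced (by decide)
  have := hL.le .bu
  have := hL.le .c
  omega

/-- The labelling of `G_5` that lists the labels in the order of the constructors of `G5V`. -/
def labelling (u au av v bu bv c d e1 e2 e3 f g1 g2 : ℕ) : G5V → ℕ
  | .u => u
  | .au => au
  | .av => av
  | .v => v
  | .bu => bu
  | .bv => bv
  | .c => c
  | .d => d
  | .e1 => e1
  | .e2 => e2
  | .e3 => e3
  | .f => f
  | .g1 => g1
  | .g2 => g2

lemma isL21Labelling_of_forall {k : ℕ} {L : G5V → ℕ} (h : (∀ x, L x ≤ k) ∧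
    (∀ x y, G5.Adj x y → Spaced (L x) (L y)) ∧
    ∀ z x, G5.Adj z x → ∀ y, G5.Adj z y → L x = L y → x = y) : IsL21Labelling G5 k L :=
  isL21Labelling_iff.2 ⟨h.1, h.2.1, fun z x hx y hy => h.2.2 z x hx y hy⟩

lemma admits_two : gadgetData.Admits 5 0 2 5 0 :=
  ⟨labelling 0 2 5 0 4 3 0 5 2 3 1 0 4 5, isL21Labelling_of_forall (by decide +kernel),
    rfl, rfl, rfl, rfl⟩

lemma admits_three : gadgetData.Admits 5 0 3 5 0 :=
  ⟨labelling 0 3 5 0 1 2 4 0 2 3 5 5 0 1, isL21Labelling_of_forall (by decide +kernel),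
    rfl, rfl, rfl, rfl⟩

lemma admits_one : gadgetData.Admits 5 5 1 4 0 :=
  ⟨labelling 5 1 4 0 3 2 0 5 2 3 1 0 4 5, isL21Labelling_of_forall (by decide +kernel),
    rfl, rfl, rfl, rfl⟩

lemma isForcing : gadgetData.IsForcing 5 where
  isSymmetric := isSymmetric
  eq_of_two_le {_ β γ _} h h_two h_lt := by
    have path := h.isPathLabelling isSymmetric
    have le_five := path.le₃
    have add_two_le := path.spaced₂₃.resolve_right (by omega)
    have not_two_four : ¬(β = 2 ∧ γ = 4) := by
      obtain ⟨L, hL, -, rfl, rfl, -⟩ := h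
      exact not_label_au_eq_two_and_label_av_eq_four hL
    omega
  admits_two := admits_two
  admits_sub_two := admits_three
  admits_one := admits_one

end G5

lemma gadget_isForcing {k : ℕ} (hk : 4 ≤ k) : (gadget k).IsForcing k := by
  by_cases h : k = 5
  · rw [gadget, if_pos h, h]
    exact G5.isForcing
  · rw [gadget, if_neg h]
    exact Gk.isForcing hk h

/-- For `k ≥ 4` and `α, β, γ, δ ∈ {0,…,k}` with `α, δ ∈ {0,k}`: there is a
`k`-L(2,1)-labelling `L` of `G_k` with `L u = α`, `L a_u = β`, `L a_v = γ`, `L v = δ`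
if and only if:
if `(α,δ) = (0,0)` then `(β,γ) ∈ {(2,k),(k,2),(k-2,k),(k,k-2)}`;
if `(α,δ) = (k,k)` then `(β,γ) ∈ {(2,0),(0,2),(k-2,0),(0,k-2)}`;
if `(α,δ) = (k,0)` then `(β,γ) = (1,k-1)`;
if `(α,δ) = (0,k)` then `(β,γ) = (k-1,1)`. -/
theorem stmt_13 (k : ℕ) (hk : 4 ≤ k) (α β γ δ : ℕ)
    (hα : α = 0 ∨ α = k) (hδ : δ = 0 ∨ δ = k) (hβ : β ≤ k) (hγ : γ ≤ k) :
    (∃ L : (gadget k).V → ℕ, IsL21Labelling (gadget k).G k L ∧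
      L (gadget k).u = α ∧ L (gadget k).au = β ∧ L (gadget k).av = γ ∧
      L (gadget k).v = δ) ↔
    ((α = 0 ∧ δ = 0 → (β, γ) ∈ ({(2,k),(k,2),(k-2,k),(k,k-2)} : Set (ℕ × ℕ))) ∧
     (α = k ∧ δ = k → (β, γ) ∈ ({(2,0),(0,2),(k-2,0),(0,k-2)} : Set (ℕ × ℕ))) ∧
     (α = k ∧ δ = 0 → (β, γ) = (1, k-1)) ∧
     (α = 0 ∧ δ = k → (β, γ) = (k-1, 1))) :=
  (gadget_isForcing hk).admits_iff (by omega) hα hδ
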